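/- Let K(Φ) be the time-stepping matrix associated with real m×m matrices Φ_1, …, Φ_N, and let 0 = m_0 < m_1 < ⋯ < m_n = N be coarse indices with interface set Γ = {m_0, …, m_n} and interior set I = {0, …, N} ∖ Γ. Then the interior principal block submatrix K^{II} of K(Φ) is invertible, and the Schur complement K^{ΓΓ} − K^{ΓI} (K^{II})⁻¹ K^{IΓ}, with the indices of Γ ordered increasingly, equals the coarse time-stepping matrix K(Ψ) with (n+1)×(n+1) blocks, where Ψ_i = Φ_{m_i} Φ_{m_i−1} ⋯ Φ_{m_{i−1}+1} for i = 1, …, n. -/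

import Mathlib

open Matrix

/-- The global-in-time time-stepping matrix `K(Φ)`: diagonal blocks are the `m × m`
identity, subdiagonal blocks (block row `i`, block column `i-1`, `i = 1, …, N`) are `-Φ i`,
remaining blocks are zero. Only `Φ 1, …, Φ N` are used. -/
def timeSteppingMatrix (m N : ℕ) (Φ : ℕ → Matrix (Fin m) (Fin m) ℝ) :
    Matrix (Fin (N + 1) × Fin m) (Fin (N + 1) × Fin m) ℝ :=
  fun p q =>
    if p.1 = q.1 then (if p.2 = q.2 then 1 else 0)
    else if (p.1 : ℕ) = (q.1 : ℕ) + 1 then -(Φ (p.1 : ℕ) p.2 q.2) else 0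

/-- `prodPhi m Φ j i = Φ i * Φ (i-1) * ⋯ * Φ (j+1)`, empty product (`i ≤ j`) is the
identity. -/
def prodPhi (m : ℕ) (Φ : ℕ → Matrix (Fin m) (Fin m) ℝ) (j i : ℕ) :
    Matrix (Fin m) (Fin m) ℝ :=
  (((List.range' (j + 1) (i - j)).reverse).map Φ).prod

/-- The interior block indices: time steps of the level-0 partition that are not coarse
(interface) indices. -/
abbrev InteriorIdx (N n : ℕ) (mIdx : Fin (n + 1) → Fin (N + 1)) : Type :=
  {i : Fin (N + 1) // i ∉ Finset.image mIdx Finset.univ}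

/-!
The inverse of `K(Φ)` is the block lower triangular matrix `P(Φ)` whose `(i, j)` block, `j ≤ i`,
is the propagator `Φ i * ⋯ * Φ (j+1)` from step `j` to step `i`. Propagators over adjacent
intervals compose, so the interface block of `P(Φ)` is exactly `P(Ψ) = K(Ψ)⁻¹`. By complementarity
of the blocks of a matrix and of its inverse, `K^{II}` is invertible because `P(Φ)^{ΓΓ}` is, and
its Schur complement is `(P(Φ)^{ΓΓ})⁻¹ = K(Ψ)`.
-/

section Propagator

variable {M : Type*} [Monoid M]

/-- The propagator `φ i * φ (i-1) * ⋯ * φ (j+1)` from step `j` to step `i`, in an arbitrary monoid.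
It is `1` if `i ≤ j`. For matrices it unfolds to `prodPhi`. -/
def propagator (φ : ℕ → M) (j i : ℕ) : M :=
  ((List.range' (j + 1) (i - j)).reverse.map φ).prod

theorem propagator_self (φ : ℕ → M) (i : ℕ) : propagator φ i i = 1 := by
  simp [propagator]

theorem propagator_mul_propagator (φ : ℕ → M) {i j k : ℕ} (hij : i ≤ j) (hjk : j ≤ k) :
    propagator φ j k * propagator φ i j = propagator φ i k := by
  have range_split : List.range' (i + 1) (k - i) =
      List.range' (i + 1) (j - i) ++ List.range' (j + 1) (k - j) := by
    rw [show j + 1 = i + 1 + (j - i) by omega, List.range'_append_1]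
    congr 1
    omega
  simp only [propagator, range_split, List.reverse_append, List.map_append, List.prod_append]

theorem propagator_succ (φ : ℕ → M) {j i : ℕ} (h : j ≤ i) :
    propagator φ j (i + 1) = φ (i + 1) * propagator φ j i := by
  rw [← propagator_mul_propagator φ h i.le_succ]
  simp [propagator]

theorem propagator_eq_of_coarse_steps {n : ℕ} {φ ψ : ℕ → M} {e : Fin (n + 1) → ℕ}
    (he : Monotone e) (hψ : ∀ l : Fin n, ψ (l + 1) = propagator φ (e l.castSucc) (e l.succ))
    {j i : Fin (n + 1)} (hji : j ≤ i) :
    propagator ψ j i = propagator φ (e j) (e i) := by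
  induction i using Fin.induction with
  | zero => simp only [Fin.le_zero_iff.mp hji, propagator_self]
  | succ i ih =>
    obtain rfl | hlt := hji.eq_or_lt
    · simp only [propagator_self]
    · have hji' : j ≤ i.castSucc := Fin.le_castSucc_iff.mpr hlt
      calc propagator ψ j i.succ
          = ψ (i + 1) * propagator ψ j i.castSucc := propagator_succ ψ hji'
        _ = propagator φ (e i.castSucc) (e i.succ) * propagator φ (e j) (e i.castSucc) := by
            rw [hψ, ih hji']
        _ = propagator φ (e j) (e i.succ) :=
            propagator_mul_propagator φ (he hji') (he i.castSucc_lt_succ.le)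

end Propagator

section PropagatorMatrix

variable {A : Type*} [MonoidWithZero A]

/-- The lower triangular matrix `P(φ)` of all propagators between the steps `0, …, N`. With
matrices as entries, it is the inverse of `blockTimeStepping N φ`. -/
def propagatorMatrix (N : ℕ) (φ : ℕ → A) : Matrix (Fin (N + 1)) (Fin (N + 1)) A :=
  of fun i j => if j ≤ i then propagator φ j i else 0

theorem propagatorMatrix_submatrix {N n : ℕ} {φ ψ : ℕ → A} {e : Fin (n + 1) → Fin (N + 1)}
    (he : StrictMono e)
    (hψ : ∀ l : Fin n, ψ (l + 1) = propagator φ (e l.castSucc) (e l.succ)) :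
    (propagatorMatrix N φ).submatrix e e = propagatorMatrix n ψ := by
  ext i j
  simp only [submatrix_apply, propagatorMatrix, of_apply, he.le_iff_le]
  split_ifs with hji
  · exact (propagator_eq_of_coarse_steps (e := fun l => (e l : ℕ)) he.monotone hψ hji).symm
  · rfl

end PropagatorMatrix

section BlockTimeStepping

variable {A : Type*} [Ring A]

/-- The time-stepping matrix as an `(N+1) × (N+1)` matrix over the ring `A` of blocks, written as
the identity minus its subdiagonal part. `Matrix.comp` turns it into a matrix of scalars. -/
def blockTimeStepping (N : ℕ) (φ : ℕ → A) : Matrix (Fin (N + 1)) (Fin (N + 1)) A :=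
  1 - of fun i j : Fin (N + 1) => if (i : ℕ) = j + 1 then φ i else 0

theorem blockTimeStepping_mul_apply_zero {α : Type*} {N : ℕ} (φ : ℕ → A)
    (X : Matrix (Fin (N + 1)) α A) (q : α) :
    (blockTimeStepping N φ * X) 0 q = X 0 q := by
  rw [blockTimeStepping, Matrix.sub_mul, Matrix.one_mul]
  simp [mul_apply]

theorem blockTimeStepping_mul_apply_succ {α : Type*} {N : ℕ} (φ : ℕ → A)
    (X : Matrix (Fin (N + 1)) α A) (i : Fin N) (q : α) :
    (blockTimeStepping N φ * X) i.succ q = X i.succ q - φ (i + 1) * X i.castSucc q := by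
  have val_eq_iff (k : Fin (N + 1)) : (i : ℕ) = k ↔ i.castSucc = k := by
    rw [Fin.ext_iff, Fin.val_castSucc]
  rw [blockTimeStepping, Matrix.sub_mul, Matrix.one_mul]
  simp [mul_apply, val_eq_iff]

theorem blockTimeStepping_mul_propagatorMatrix (N : ℕ) (φ : ℕ → A) :
    blockTimeStepping N φ * propagatorMatrix N φ = 1 := by
  ext i j
  cases i using Fin.cases with
  | zero =>
    rw [blockTimeStepping_mul_apply_zero]
    obtain rfl | hj := eq_or_ne j 0
    · simp [propagatorMatrix, propagator_self]
    · simp [propagatorMatrix, hj, one_apply_ne' hj]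
  | succ i =>
    rw [blockTimeStepping_mul_apply_succ]
    obtain hlt | rfl | hgt := lt_trichotomy j i.succ
    · have hji : j ≤ i.castSucc := Fin.le_castSucc_iff.mpr hlt
      have step : propagator φ j i.succ = φ (i + 1) * propagator φ j i.castSucc :=
        propagator_succ φ hji
      simp only [propagatorMatrix, of_apply, if_pos hlt.le, if_pos hji, step, sub_self,
        one_apply_ne' hlt.ne]
    · simp [propagatorMatrix, propagator_self]
    · have hij : ¬ j ≤ i.castSucc := (i.castSucc_lt_succ.trans hgt).not_ge
      simp [propagatorMatrix, hgt.not_ge, hij, hgt.ne]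

theorem comp_blockTimeStepping_mul_comp_propagatorMatrix {κ R : Type*} [Fintype κ]
    [DecidableEq κ] [Ring R] (N : ℕ) (Φ : ℕ → Matrix κ κ R) :
    comp _ _ _ _ R (blockTimeStepping N Φ) * comp _ _ _ _ R (propagatorMatrix N Φ) = 1 := by
  rw [← compRingEquiv_apply, ← compRingEquiv_apply, ← map_mul,
    blockTimeStepping_mul_propagatorMatrix, map_one]

theorem timeSteppingMatrix_eq_comp (m N : ℕ) (Φ : ℕ → Matrix (Fin m) (Fin m) ℝ) :
    timeSteppingMatrix m N Φ = comp _ _ _ _ ℝ (blockTimeStepping N Φ) := by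
  ext ⟨i, a⟩ ⟨j, b⟩
  by_cases hij : i = j
  · simp [timeSteppingMatrix, blockTimeStepping, hij, one_apply]
  · by_cases hsucc : (i : ℕ) = j + 1 <;>
      simp [timeSteppingMatrix, blockTimeStepping, hij, hsucc]

end BlockTimeStepping

section SchurComplement

variable {R : Type*} [CommRing R]

theorem isUnit_toBlocks₁₁_and_schurComplement_eq {ι κ : Type*} [Fintype ι] [DecidableEq ι]
    [Fintype κ] [DecidableEq κ] {K P : Matrix (ι ⊕ κ) (ι ⊕ κ) R} {S : Matrix κ κ R}
    (hKP : K * P = 1) (hPS : P.toBlocks₂₂ * S = 1) :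
    IsUnit K.toBlocks₁₁ ∧
      K.toBlocks₂₂ - K.toBlocks₂₁ * K.toBlocks₁₁⁻¹ * K.toBlocks₁₂ = S := by
  rw [← fromBlocks_toBlocks K, ← fromBlocks_toBlocks P, fromBlocks_multiply, ← fromBlocks_one,
    fromBlocks_inj] at hKP
  obtain ⟨h₁₁, h₁₂, -, h₂₂⟩ := hKP
  have toBlocks₁₂_eq : K.toBlocks₁₂ = -(K.toBlocks₁₁ * (P.toBlocks₁₂ * S)) := by
    rw [← Matrix.mul_assoc, eq_neg_of_add_eq_zero_left h₁₂, Matrix.neg_mul, neg_neg,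
      Matrix.mul_assoc, hPS, Matrix.mul_one]
  have isUnit_toBlocks₁₁ : IsUnit K.toBlocks₁₁ := by
    refine .of_mul_eq_one (P.toBlocks₁₁ - P.toBlocks₁₂ * S * P.toBlocks₂₁) ?_
    rw [Matrix.mul_sub, ← Matrix.mul_assoc, sub_eq_add_neg, ← Matrix.neg_mul, ← toBlocks₁₂_eq,
      h₁₁]
  refine ⟨isUnit_toBlocks₁₁, ?_⟩
  calc K.toBlocks₂₂ - K.toBlocks₂₁ * K.toBlocks₁₁⁻¹ * K.toBlocks₁₂
      = K.toBlocks₂₂ + K.toBlocks₂₁ * (P.toBlocks₁₂ * S) := by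
        rw [toBlocks₁₂_eq, Matrix.mul_assoc, Matrix.mul_neg, nonsing_inv_mul_cancel_left _ _
          ((isUnit_iff_isUnit_det _).mp isUnit_toBlocks₁₁), Matrix.mul_neg, sub_neg_eq_add]
    _ = (K.toBlocks₂₁ * P.toBlocks₁₂ + K.toBlocks₂₂ * P.toBlocks₂₂) * S := by
        rw [Matrix.add_mul, Matrix.mul_assoc, Matrix.mul_assoc, hPS, Matrix.mul_one, add_comm]
    _ = S := by rw [h₂₂, Matrix.one_mul]

/-- The partition `I ⊕ Γ` of the time steps, as an equivalence: interior steps on the left, and on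
the right the interface steps, labelled by their coarse index. -/
noncomputable def interiorSumInterface {N n : ℕ} {mIdx : Fin (n + 1) → Fin (N + 1)}
    (hinj : Function.Injective mIdx) : InteriorIdx N n mIdx ⊕ Fin (n + 1) ≃ Fin (N + 1) :=
  Equiv.ofBijective (Sum.elim Subtype.val mIdx) <| by
    constructor
    · refine Subtype.val_injective.sumElim hinj fun i l h => i.2 ?_
      exact h ▸ Finset.mem_image_of_mem mIdx (Finset.mem_univ l)
    · intro i
      by_cases hi : i ∈ Finset.image mIdx Finset.univ
      · obtain ⟨l, -, rfl⟩ := Finset.mem_image.mp hi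
        exact ⟨.inr l, rfl⟩
      · exact ⟨.inl ⟨i, hi⟩, rfl⟩

theorem schurComplement_of_timeSteppingMatrix_general {κ : Type*} [Fintype κ] [DecidableEq κ]
    {N n : ℕ} (Φ : ℕ → Matrix κ κ R) {mIdx : Fin (n + 1) → Fin (N + 1)}
    (hmono : StrictMono mIdx) (Ψ : ℕ → Matrix κ κ R)
    (hΨ : ∀ l : Fin n, Ψ (l + 1) = propagator Φ (mIdx l.castSucc) (mIdx l.succ)) :
    let K := comp _ _ _ _ R (blockTimeStepping N Φ)
    let inclI : InteriorIdx N n mIdx × κ → Fin (N + 1) × κ := fun p => (p.1.1, p.2)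
    let inclΓ : Fin (n + 1) × κ → Fin (N + 1) × κ := fun p => (mIdx p.1, p.2)
    IsUnit (K.submatrix inclI inclI) ∧
      K.submatrix inclΓ inclΓ -
          K.submatrix inclΓ inclI * (K.submatrix inclI inclI)⁻¹ * K.submatrix inclI inclΓ =
        comp _ _ _ _ R (blockTimeStepping n Ψ) := by
  intro K _ _
  let P := comp _ _ _ _ R (propagatorMatrix N Φ)
  let split : (InteriorIdx N n mIdx × κ) ⊕ (Fin (n + 1) × κ) ≃ Fin (N + 1) × κ :=
    (Equiv.sumProdDistrib _ _ κ).symm.trans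
      ((interiorSumInterface hmono.injective).prodCongr (.refl κ))
  have fine_inverse : K.submatrix split split * P.submatrix split split = 1 := by
    rw [submatrix_mul_equiv, comp_blockTimeStepping_mul_comp_propagatorMatrix,
      submatrix_one_equiv]
  have interface_block : (P.submatrix split split).toBlocks₂₂ =
      comp _ _ _ _ R (propagatorMatrix n Ψ) := by
    rw [← propagatorMatrix_submatrix hmono hΨ]
    rfl
  have coarse_inverse : (P.submatrix split split).toBlocks₂₂ *
      comp _ _ _ _ R (blockTimeStepping n Ψ) = 1 := by
    rw [interface_block, mul_eq_one_comm, comp_blockTimeStepping_mul_comp_propagatorMatrix]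
  exact isUnit_toBlocks₁₁_and_schurComplement_eq fine_inverse coarse_inverse

end SchurComplement

/-- Let `K(Φ)` be the time-stepping matrix of `Φ 1, …, Φ N` and
`0 = mIdx 0 < mIdx 1 < ⋯ < mIdx n = N` coarse indices, with interface set
`Γ = {mIdx 0, …, mIdx n}` and interior set `I` its complement. Then the interior block
`K^{II}` is invertible, and the Schur complement `K^{ΓΓ} - K^{ΓI} (K^{II})⁻¹ K^{IΓ}`
(with `Γ` ordered increasingly) equals the coarse time-stepping matrix `K(Ψ)` whose
propagators are `Ψ i = Φ (mIdx i) * ⋯ * Φ (mIdx (i-1) + 1)` for `i = 1, …, n`. -/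
theorem schurComplement_of_timeSteppingMatrix (m N n : ℕ)
    (hm : 0 < m) (hN : 0 < N) (hn : 0 < n)
    (Φ : ℕ → Matrix (Fin m) (Fin m) ℝ)
    (mIdx : Fin (n + 1) → Fin (N + 1)) (hmono : StrictMono mIdx)
    (h0 : mIdx 0 = 0) (hlast : mIdx (Fin.last n) = Fin.last N)
    (Ψ : ℕ → Matrix (Fin m) (Fin m) ℝ)
    (hΨ : ∀ i, 1 ≤ i → ∀ h2 : i ≤ n,
      Ψ i = prodPhi m Φ (mIdx ⟨i - 1, by omega⟩).val (mIdx ⟨i, by omega⟩).val) :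
    IsUnit ((timeSteppingMatrix m N Φ).submatrix
        (fun p : InteriorIdx N n mIdx × Fin m => (p.1.1, p.2))
        (fun p : InteriorIdx N n mIdx × Fin m => (p.1.1, p.2))) ∧
    (timeSteppingMatrix m N Φ).submatrix
        (fun p : Fin (n + 1) × Fin m => (mIdx p.1, p.2))
        (fun p : Fin (n + 1) × Fin m => (mIdx p.1, p.2)) -
      (timeSteppingMatrix m N Φ).submatrix
          (fun p : Fin (n + 1) × Fin m => (mIdx p.1, p.2))
          (fun p : InteriorIdx N n mIdx × Fin m => (p.1.1, p.2)) *
        ((timeSteppingMatrix m N Φ).submatrix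
          (fun p : InteriorIdx N n mIdx × Fin m => (p.1.1, p.2))
          (fun p : InteriorIdx N n mIdx × Fin m => (p.1.1, p.2)))⁻¹ *
        (timeSteppingMatrix m N Φ).submatrix
          (fun p : InteriorIdx N n mIdx × Fin m => (p.1.1, p.2))
          (fun p : Fin (n + 1) × Fin m => (mIdx p.1, p.2)) =
    timeSteppingMatrix m n Ψ := by
  simpa only [timeSteppingMatrix_eq_comp] using
    schurComplement_of_timeSteppingMatrix_general Φ hmono Ψ fun l => hΨ (l + 1) (by omega) l.2
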